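/- For integers k ≥ i ≥ 1, ∑_{N_1 ≥ … ≥ N_{k−1} ≥ 0} (−q^{1−2N_1}; q²)_{N_1} · q^{2(N_1² + … + N_{k−1}² + N_i + … + N_{k−1})} / ((q²;q²)_{N_1−N_2} ⋯ (q²;q²)_{N_{k−1}}) = (q²;q⁴)_∞ (q^{4k}, q^{2i−1}, q^{4k−2i+1}; q^{4k})_∞ / (q;q)_∞. -/

import Mathlib

/-!
The proof runs through the Bailey lemma, in base `q ^ 2`, with `rr q n = 1 / (q²;q²)_n` extended by
`0` to negative `n`. A *Bailey pair of level `ε`* (`IsBailey`; the Bailey parameter is `a = q ^ (2ε)`)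
is a pair of sequences with `β n = ∑_ρ c ρ / ((q²;q²)_{n-ρ} (q²;q²)_{n+ε+ρ})`, where `ρ` runs over
all integers. Summing `β` against a kernel whose transform is known gives a new Bailey pair
(`IsBailey.step`); each kernel identity is an instance of one terminating `q`-Vandermonde sum
(`vandermonde`), folded to negative `ρ` by symmetry (`kernel_extend`).

The multiple sum is a chain of such steps. The innermost sums, those with index at least `i`, carry
`q ^ (2N² + 2N)`: they are steps at level `1` starting from the unit Bailey pair (`isBailey_unit`, a
case of the finite Jacobi triple product `finite_jtp`). At index `i` the level drops from `1` to `0`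
without changing `β` (`IsBailey.one_to_zero`), and the sums with index below `i` carry `q ^ (2N²)`.
The outermost sum, over `N_1`, is different: `(-q^{1-2N};q²)_N q^{2N²} = q^{N²} (-q;q²)_N`, so it
uses the kernels `kernel_odd_zero` (when `i ≥ 2`) or `kernel_odd_one` (when `i = 1`). In both cases
the outcome is a finite identity with right-hand side
`(-q;q²)_{n+ε} ∑_ρ (-1)^ρ q^{2kρ² + (2k-2i+1)ρ} / ((q²;q²)_{n-ρ} (q²;q²)_{n+ε+ρ})`,
where `ε = 1` if `i = 1` and `ε = 0` otherwise (`bb_two_odd`, `bb_one_odd`).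

Letting `n → ∞` by dominated convergence for the `q`-adic valuation (`tannery`) gives that the
multiple sum equals `(-q;q²)_∞ / (q²;q²)_∞` times a theta series (`sum_eq`). The limit of `finite_jtp`
factors the theta series (`theta_eq`), and `(-q;q²)_∞ / (q²;q²)_∞ = (q²;q⁴)_∞ / (q;q)_∞`
(`pochInf_q`). For `k = 1` the sum is `1`, and so is the product (`pochInf_q_four`).
-/


/- Bressoud's identity (generating function counterpart of the
Andrews–Göllnitz–Gordon theorem), as an identity in the field of formal
Laurent series over ℚ. -/

noncomputable section
open scoped Classical

/-- The formal variable `q`. -/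
def q : LaurentSeries ℚ := HahnSeries.single 1 1

/-- Finite q-Pochhammer symbol `(a;x)_n`. -/
def poch (a x : LaurentSeries ℚ) (n : ℕ) : LaurentSeries ℚ :=
  ∏ j ∈ Finset.range n, (1 - a * x ^ j)

/-- Infinite q-Pochhammer symbol `(a;x)_∞`. -/
def pochInf (a x : LaurentSeries ℚ) : LaurentSeries ℚ :=
  ∏' j : ℕ, (1 - a * x ^ j)

/-- `N_{j+1}` with the convention `N_k = 0`. -/
def next {m : ℕ} (N : Fin m → ℕ) (j : Fin m) : ℕ :=
  if h : (j : ℕ) + 1 < m then N ⟨(j : ℕ) + 1, h⟩ else 0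

/-- `N_1`, i.e. the first entry of the tuple (with the convention that it is `0`
for an empty tuple, which only occurs when `k = 1`). -/
def first {m : ℕ} (N : Fin m → ℕ) : ℕ :=
  if h : 0 < m then N ⟨0, h⟩ else 0

/-! ### Reciprocal `q`-factorials and finite summation formulas -/

section algebra
variable {F : Type*} [Field F]

/-- The reciprocal `1 / (p²;p²)_n`, extended by `0` to negative integers `n`. With this convention the
recurrence `rr_rec` holds for every integer, and bilateral sums terminate by themselves. -/
def rr (p : F) : ℤ → F
  | Int.ofNat n => (∏ j ∈ Finset.range n, (1 - p ^ 2 * (p ^ 2) ^ j))⁻¹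
  | Int.negSucc _ => 0

theorem rr_natCast (p : F) (n : ℕ) :
    rr p n = (∏ j ∈ Finset.range n, (1 - p ^ 2 * (p ^ 2) ^ j))⁻¹ := rfl

theorem rr_neg (p : F) {n : ℤ} (hn : n < 0) : rr p n = 0 := by
  obtain ⟨m, rfl⟩ := Int.eq_negSucc_of_lt_zero hn
  rfl

theorem rr_rec {p : F} (hp : ∀ n : ℕ, 0 < n → p ^ (2 * n) ≠ 1) (n : ℤ) :
    (1 - p ^ (2 * n)) * rr p n = rr p (n - 1) := by
  rcases lt_trichotomy n 0 with h | rfl | h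
  · rw [rr_neg p h, rr_neg p (by omega), mul_zero]
  · rw [rr_neg p (by omega : (0 : ℤ) - 1 < 0)]; simp
  · obtain ⟨m, rfl⟩ : ∃ m : ℕ, n = (m : ℤ) + 1 := ⟨(n - 1).toNat, by omega⟩
    have e : (m : ℤ) + 1 = ((m + 1 : ℕ) : ℤ) := by push_cast; rfl
    rw [add_sub_cancel_right, e, rr_natCast, rr_natCast, Finset.prod_range_succ, mul_inv]
    have h1 : p ^ (2 * ((m + 1 : ℕ) : ℤ)) = p ^ 2 * (p ^ 2) ^ m := by
      rw [← pow_mul, ← pow_add]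
      exact_mod_cast congrArg (fun k : ℕ => p ^ k) (by ring : 2 * (m + 1) = 2 + 2 * m)
    have h2 : (1 - p ^ 2 * (p ^ 2) ^ m) ≠ 0 := by
      rw [← pow_mul, ← pow_add, sub_ne_zero]
      have := hp (m + 1) (by omega)
      rw [show 2 + 2 * m = 2 * (m + 1) by ring]
      exact this.symm
    rw [h1]
    field_simp

/-- A terminating `q`-Vandermonde sum in base `p²`, with a balancing condition `b z = p ^ (2(d+1))`.
It is homogeneous in `x`, so that `x = 0` is allowed: this is the confluent case behind the kernel of
`kernel_plain`, while `x = 1` gives the kernels with the factors `1 + p ^ (2j+1)`. The induction on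
`M` multiplies by `1 - p ^ (2(M+1))`, which splits the sum into one for `(d, b)` and one for
`(d + 1, b p²)`. -/
theorem vandermonde {p : F} (hp0 : p ≠ 0) (hp : ∀ n : ℕ, 0 < n → p ^ (2 * n) ≠ 1) (x z : F)
    (M : ℕ) : ∀ (d : ℤ) (b : F), b * z = p ^ (2 * (d + 1)) →
      ∑ t ∈ Finset.range (M + 1), (∏ j ∈ Finset.range t, (x + b * p ^ (2 * j))) *
          p ^ (t * (t - 1)) * z ^ t * (rr p (M - t) * rr p t * rr p (t + d)) =
        (∏ j ∈ Finset.range M, (1 + x * z * p ^ (2 * j))) * (rr p M * rr p (M + d)) := by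
  induction M with
  | zero => intro d b _; simp [show rr p 0 = 1 from by simpa using rr_natCast p 0]
  | succ M ih =>
    intro d b hb
    have hM : (1 - p ^ (2 * (M + 1)) : F) ≠ 0 := sub_ne_zero.mpr (hp _ (by omega)).symm
    -- Since `M + 1 = (M + 1 - t) + t`, the prefactor splits over the first two reciprocal factorials.
    have key : (1 - p ^ (2 * (M + 1))) * ∑ t ∈ Finset.range (M + 1 + 1),
          (∏ j ∈ Finset.range t, (x + b * p ^ (2 * j))) *
          p ^ (t * (t - 1)) * z ^ t * (rr p ((M + 1 : ℕ) - t) * rr p t * rr p (t + d)) =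
        ∑ t ∈ Finset.range (M + 1), (∏ j ∈ Finset.range t, (x + b * p ^ (2 * j))) *
          p ^ (t * (t - 1)) * z ^ t * (rr p (M - t) * rr p t * rr p (t + d)) +
        p ^ (2 * M) * (x * z + b * z) * ∑ t ∈ Finset.range (M + 1),
          (∏ j ∈ Finset.range t, (x + (b * p ^ 2) * p ^ (2 * j))) *
          p ^ (t * (t - 1)) * z ^ t * (rr p (M - t) * rr p t * rr p (t + (d + 1))) := by
      have split : ∀ t : ℕ, (1 - p ^ (2 * (M + 1))) *
          ((∏ j ∈ Finset.range t, (x + b * p ^ (2 * j))) *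
          p ^ (t * (t - 1)) * z ^ t * (rr p ((M + 1 : ℕ) - t) * rr p t * rr p (t + d))) =
          (∏ j ∈ Finset.range t, (x + b * p ^ (2 * j))) *
          p ^ (t * (t - 1)) * z ^ t * (rr p (M - t) * rr p t * rr p (t + d)) +
          (∏ j ∈ Finset.range t, (x + b * p ^ (2 * j))) *
          p ^ (t * (t - 1)) * z ^ t * (p ^ (2 * ((M + 1 : ℤ) - t)) *
            (rr p ((M + 1 : ℤ) - t) * rr p (t - 1) * rr p (t + d))) := by
        intro t
        have h1 := rr_rec hp ((M + 1 : ℤ) - t)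
        have h2 := rr_rec hp (t : ℤ)
        rw [show (M + 1 : ℤ) - t - 1 = M - t by ring] at h1
        have h3 : p ^ (2 * (M + 1)) = p ^ (2 * ((M + 1 : ℤ) - t)) * p ^ (2 * (t : ℤ)) := by
          rw [← zpow_add₀ hp0, ← zpow_natCast]; congr 1; push_cast; ring
        rw [← h1, ← h2, h3]
        push_cast
        ring
      rw [Finset.mul_sum, Finset.sum_congr rfl fun t _ => split t, Finset.sum_add_distrib]
      congr 1
      · rw [Finset.sum_range_succ, rr_neg p (by push_cast; omega : (M : ℤ) - (M + 1 : ℕ) < 0)]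
        ring
      · rw [Finset.sum_range_succ', rr_neg p (by simp : ((0 : ℕ) : ℤ) - 1 < 0), Finset.mul_sum]
        simp only [mul_zero, zero_mul, add_zero]
        refine Finset.sum_congr rfl fun t ht => ?_
        have h3 : p ^ ((t + 1) * (t + 1 - 1)) * p ^ (2 * ((M + 1 : ℤ) - (t + 1 : ℕ))) =
            p ^ (2 * M) * p ^ (t * (t - 1)) := by
          rw [← zpow_natCast, ← zpow_natCast, ← zpow_natCast, ← zpow_add₀ hp0, ← zpow_add₀ hp0]
          congr 1
          rcases t with _ | t
          · push_cast; simp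
          · push_cast; simp; ring
        have h4 : ∏ j ∈ Finset.range t, (x + b * p ^ (2 * (j + 1))) =
            ∏ j ∈ Finset.range t, (x + (b * p ^ 2) * p ^ (2 * j)) :=
          Finset.prod_congr rfl fun j _ => by ring
        rw [Finset.prod_range_succ', h4]
        have e1 : (M + 1 : ℤ) - (t + 1 : ℕ) = M - t := by push_cast; ring
        have e2 : ((t + 1 : ℕ) : ℤ) - 1 = t := by push_cast; ring
        have e3 : ((t + 1 : ℕ) : ℤ) + d = t + (d + 1) := by push_cast; ring
        rw [e1] at h3 ⊢
        rw [e2, e3]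
        simp only [mul_zero, pow_zero, mul_one]
        linear_combination (∏ j ∈ Finset.range t, (x + (b * p ^ 2) * p ^ (2 * j))) * (x + b) *
          z ^ (t + 1) * (rr p (M - t) * rr p t * rr p (t + (d + 1))) * h3
    have hb' : (b * p ^ 2) * z = p ^ (2 * (d + 1 + 1)) := by
      rw [mul_right_comm, hb, ← zpow_natCast p 2, ← zpow_add₀ hp0]; congr 1; push_cast; ring
    refine mul_left_cancel₀ hM ?_
    rw [key, ih d b hb, ih (d + 1) _ hb', Finset.prod_range_succ]
    have h1 := rr_rec hp ((M + 1 : ℕ) + d)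
    have h2 := rr_rec hp ((M + 1 : ℕ) : ℤ)
    have e1 : ((M + 1 : ℕ) : ℤ) + d - 1 = M + d := by push_cast; ring
    have e2 : ((M + 1 : ℕ) : ℤ) - 1 = M := by push_cast; ring
    have e3 : (M : ℤ) + (d + 1) = ((M + 1 : ℕ) : ℤ) + d := by push_cast; ring
    rw [e1] at h1
    rw [e2] at h2
    have h5 : p ^ (2 * (((M + 1 : ℕ) : ℤ) + d)) = p ^ (2 * M) * (b * z) := by
      rw [hb, ← zpow_natCast, ← zpow_add₀ hp0]; congr 1; push_cast; ring
    have h6 : p ^ (2 * ((M + 1 : ℕ) : ℤ)) = p ^ (2 * (M + 1)) := by exact_mod_cast rfl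
    rw [h5] at h1
    rw [h6] at h2
    rw [e3, ← h1, ← h2]
    ring

/-- Bilateral sums against `1 / ((p²;p²)_{a-ρ} (p²;p²)_{b+ρ})` are finite, which makes every
`finsum` below a genuine sum. -/
theorem finite_support_rr (p : F) (g : ℤ → F) (a b : ℤ) :
    (Function.support fun ρ : ℤ => g ρ * (rr p (a - ρ) * rr p (b + ρ))).Finite := by
  refine (Set.finite_Icc (-b) a).subset fun ρ hρ => ?_
  simp only [Function.mem_support, ne_eq, mul_eq_zero, not_or] at hρ
  constructor
  · by_contra h; exact hρ.2.2 (rr_neg p (by omega))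
  · by_contra h; exact hρ.2.1 (rr_neg p (by omega))

/-- The finite Jacobi triple product. -/
theorem finite_jtp {p y : F} (hp0 : p ≠ 0) (hp : ∀ n : ℕ, 0 < n → p ^ (2 * n) ≠ 1) (hy : y ≠ 0)
    (m n : ℕ) :
    ∑ᶠ ρ : ℤ, y ^ ρ * p ^ (ρ * (ρ - 1)) * (rr p (n - ρ) * rr p (m + ρ)) =
      rr p ((m + n : ℕ) : ℤ) * (∏ l ∈ Finset.range m, (1 + y⁻¹ * p ^ (2 * (l + 1)))) *
        ∏ l ∈ Finset.range n, (1 + y * p ^ (2 * l)) := by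
  have hne : ∀ N : ℕ, (1 - p ^ (2 * ((N + 1 : ℕ) : ℤ))) ≠ 0 := fun N =>
    sub_ne_zero.mpr (by exact_mod_cast (hp (N + 1) (by omega)).symm)
  induction n with
  | zero =>
    induction m with
    | zero =>
      rw [finsum_eq_single _ (0 : ℤ)]
      · simp [show rr p 0 = 1 from by simpa using rr_natCast p 0]
      · intro ρ hρ
        rcases lt_or_gt_of_ne hρ with h | h
        · rw [rr_neg p (show ((0 : ℕ) : ℤ) + ρ < 0 by simpa using h)]; ring
        · rw [rr_neg p (show ((0 : ℕ) : ℤ) - ρ < 0 by simpa using h)]; ring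
    | succ m ih =>
      refine mul_left_cancel₀ (hne (m + 0)) ?_
      have hr := rr_rec hp ((m + 0 + 1 : ℕ) : ℤ)
      rw [show ((m + 0 + 1 : ℕ) : ℤ) - 1 = ((m + 0 : ℕ) : ℤ) by push_cast; ring] at hr
      have split : ∀ ρ : ℤ, (1 - p ^ (2 * ((m + 0 + 1 : ℕ) : ℤ))) *
          (y ^ ρ * p ^ (ρ * (ρ - 1)) * (rr p (((0 : ℕ) : ℤ) - ρ) * rr p ((m + 1 : ℕ) + ρ))) =
          y ^ ρ * p ^ (ρ * (ρ - 1)) * (rr p (((0 : ℕ) : ℤ) - ρ) * rr p (m + ρ)) +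
          y ^ ρ * p ^ (ρ * (ρ - 1)) * p ^ (2 * (m + 1 + ρ)) *
            (rr p (-1 - ρ) * rr p ((m + 1 : ℤ) + ρ)) := by
        intro ρ
        have h1 := rr_rec hp ((m + 1 : ℤ) + ρ)
        have h2 := rr_rec hp (-ρ)
        rw [show (m + 1 : ℤ) + ρ - 1 = m + ρ by ring] at h1
        rw [show -ρ - 1 = -1 - ρ by ring] at h2
        have h3 : p ^ (2 * ((m + 0 + 1 : ℕ) : ℤ)) = p ^ (2 * ((m + 1 : ℤ) + ρ)) * p ^ (2 * (-ρ)) := by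
          rw [← zpow_add₀ hp0]; congr 1; push_cast; ring
        rw [← h1, ← h2, h3]
        push_cast
        simp only [zero_sub]
        ring
      have shift : ∑ᶠ ρ : ℤ, y ^ ρ * p ^ (ρ * (ρ - 1)) * p ^ (2 * (m + 1 + ρ)) *
            (rr p (-1 - ρ) * rr p ((m + 1 : ℤ) + ρ)) = y⁻¹ * p ^ (2 * (m + 1)) *
          ∑ᶠ ρ : ℤ, y ^ ρ * p ^ (ρ * (ρ - 1)) * (rr p (((0 : ℕ) : ℤ) - ρ) * rr p (m + ρ)) := by
        rw [mul_finsum, ← finsum_comp_equiv (Equiv.addRight (-1 : ℤ))]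
        refine finsum_congr fun ρ => ?_
        simp only [Equiv.coe_addRight]
        have e1 : (-1 : ℤ) - (ρ + -1) = ((0 : ℕ) : ℤ) - ρ := by push_cast; ring
        have e2 : (m + 1 : ℤ) + (ρ + -1) = m + ρ := by ring
        have e3 : p ^ ((ρ + -1) * (ρ + -1 - 1)) * p ^ (2 * ((m : ℤ) + 1 + (ρ + -1))) =
            p ^ (2 * (m + 1)) * p ^ (ρ * (ρ - 1)) := by
          rw [← zpow_natCast, ← zpow_add₀ hp0, ← zpow_add₀ hp0]; congr 1; push_cast; ring
        rw [e2] at e3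
        rw [e1, e2, zpow_add₀ hy, zpow_neg_one]
        linear_combination y ^ ρ * y⁻¹ * (rr p (((0 : ℕ) : ℤ) - ρ) * rr p (m + ρ)) * e3
      rw [mul_finsum, finsum_congr split,
        finsum_add_distrib (finite_support_rr p _ _ _) (finite_support_rr p _ _ _), shift, ih,
        Finset.prod_range_succ, show m + 1 + 0 = m + 0 + 1 by ring, ← hr]
      ring
  | succ n ih =>
    refine mul_left_cancel₀ (hne (m + n)) ?_
    have hr := rr_rec hp ((m + n + 1 : ℕ) : ℤ)
    rw [show ((m + n + 1 : ℕ) : ℤ) - 1 = ((m + n : ℕ) : ℤ) by push_cast; ring] at hr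
    have split : ∀ ρ : ℤ, (1 - p ^ (2 * ((m + n + 1 : ℕ) : ℤ))) *
        (y ^ ρ * p ^ (ρ * (ρ - 1)) * (rr p ((n + 1 : ℕ) - ρ) * rr p (m + ρ))) =
        y ^ ρ * p ^ (ρ * (ρ - 1)) * (rr p (n - ρ) * rr p (m + ρ)) +
        y ^ ρ * p ^ (ρ * (ρ - 1)) * p ^ (2 * (n + 1 - ρ)) *
          (rr p ((n + 1 : ℤ) - ρ) * rr p ((m - 1 : ℤ) + ρ)) := by
      intro ρ
      have h1 := rr_rec hp ((n + 1 : ℤ) - ρ)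
      have h2 := rr_rec hp ((m : ℤ) + ρ)
      rw [show (n + 1 : ℤ) - ρ - 1 = n - ρ by ring] at h1
      rw [show (m : ℤ) + ρ - 1 = m - 1 + ρ by ring] at h2
      have h3 : p ^ (2 * ((m + n + 1 : ℕ) : ℤ)) =
          p ^ (2 * ((n + 1 : ℤ) - ρ)) * p ^ (2 * ((m : ℤ) + ρ)) := by
        rw [← zpow_add₀ hp0]; congr 1; push_cast; ring
      rw [← h1, ← h2, h3]
      push_cast
      ring
    have shift : ∑ᶠ ρ : ℤ, y ^ ρ * p ^ (ρ * (ρ - 1)) * p ^ (2 * (n + 1 - ρ)) *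
          (rr p ((n + 1 : ℤ) - ρ) * rr p ((m - 1 : ℤ) + ρ)) = y * p ^ (2 * n) *
        ∑ᶠ ρ : ℤ, y ^ ρ * p ^ (ρ * (ρ - 1)) * (rr p (n - ρ) * rr p (m + ρ)) := by
      rw [mul_finsum, ← finsum_comp_equiv (Equiv.addRight (1 : ℤ))]
      refine finsum_congr fun ρ => ?_
      simp only [Equiv.coe_addRight]
      have e1 : (n + 1 : ℤ) - (ρ + 1) = n - ρ := by ring
      have e2 : (m - 1 : ℤ) + (ρ + 1) = m + ρ := by ring
      have e3 : p ^ ((ρ + 1) * (ρ + 1 - 1)) * p ^ (2 * ((n : ℤ) + 1 - (ρ + 1))) =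
          p ^ (2 * n) * p ^ (ρ * (ρ - 1)) := by
        rw [← zpow_natCast, ← zpow_add₀ hp0, ← zpow_add₀ hp0]; congr 1; push_cast; ring
      rw [e1] at e3
      rw [e1, e2, zpow_add₀ hy, zpow_one]
      linear_combination y ^ ρ * y * (rr p (n - ρ) * rr p (m + ρ)) * e3
    rw [mul_finsum, finsum_congr split,
      finsum_add_distrib (finite_support_rr p _ _ _) (finite_support_rr p _ _ _), shift, ih,
      Finset.prod_range_succ, show m + (n + 1) = m + n + 1 by ring, ← hr]
    ring

end algebra

/-! ### Bailey pairs -/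

section bailey
variable {F : Type*} [Field F]

/-- `(c, β)` is a Bailey pair of level `ε` in base `p²`:
`β n = ∑_ρ c ρ / ((p²;p²)_{n-ρ} (p²;p²)_{n+ε+ρ})`, the sum being over all integers `ρ`. Compared with
the usual Bailey pairs relative to `a = p ^ (2ε)`, the sequence `α_r` on the naturals is spread over
the two integers `r` and `-r - ε`. -/
def IsBailey (p : F) (ε : ℕ) (c : ℤ → F) (β : ℕ → F) : Prop :=
  ∀ n : ℕ, β n = ∑ᶠ ρ : ℤ, c ρ * (rr p (n - ρ) * rr p (n + ε + ρ))

/-- The hypothesis on natural powers extends to nonzero integer powers. -/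
theorem zpow_ne_one' {p : F} (hp : ∀ n : ℕ, 0 < n → p ^ (2 * n) ≠ 1) {n : ℤ} (hn : n ≠ 0) :
    p ^ (2 * n) ≠ 1 := by
  rcases lt_or_gt_of_ne hn with h | h
  · obtain ⟨m, rfl⟩ : ∃ m : ℕ, n = -((m + 1 : ℕ) : ℤ) := ⟨(-n - 1).toNat, by omega⟩
    rw [mul_neg, zpow_neg, ne_eq, inv_eq_one]
    exact_mod_cast hp (m + 1) (by omega)
  · obtain ⟨m, rfl⟩ : ∃ m : ℕ, n = ((m + 1 : ℕ) : ℤ) := ⟨(n - 1).toNat, by omega⟩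
    exact_mod_cast hp (m + 1) (by omega)

theorem one_add_odd_ne {p : F} (hp0 : p ≠ 0) (hp : ∀ n : ℕ, 0 < n → p ^ (2 * n) ≠ 1) (ρ : ℤ) :
    1 + p ^ (2 * ρ + 1) ≠ 0 := by
  intro h
  have h1 : p ^ (2 * ρ + 1) = -1 := by linear_combination h
  refine zpow_ne_one' hp (show 2 * ρ + 1 ≠ 0 by omega) ?_
  rw [two_mul (2 * ρ + 1), zpow_add₀ hp0, h1]; ring

/-- A kernel identity only has to be checked for natural `ρ`, where the sum starts at `s = ρ`:
the substitution `ρ ↦ -ρ - ε` exchanges the two reciprocal factorials. -/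
theorem kernel_extend (p : F) {ε : ℕ} (hε : ε ≤ 1) (w : ℕ → F) (A : ℤ → F) (n : ℕ)
    (hA : ∀ ρ : ℤ, A (-ρ - ε) = A ρ)
    (h : ∀ ρ M : ℕ, n = ρ + M → ∑ t ∈ Finset.range (M + 1),
      w (ρ + t) * (rr p (M - t) * rr p t * rr p (t + (2 * ρ + ε : ℕ))) =
        A ρ * (rr p M * rr p (M + (2 * ρ + ε : ℕ)))) (ρ : ℤ) :
    ∑ s ∈ Finset.range (n + 1), w s * (rr p (n - s) * (rr p (s - ρ) * rr p (s + ε + ρ))) =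
      A ρ * (rr p (n - ρ) * rr p (n + ε + ρ)) := by
  have nonneg : ∀ ρ : ℕ,
      ∑ s ∈ Finset.range (n + 1), w s * (rr p (n - s) * (rr p (s - ρ) * rr p (s + ε + ρ))) =
        A ρ * (rr p (n - ρ) * rr p (n + ε + ρ)) := by
    intro ρ
    rcases le_or_gt ρ n with hρ | hρ
    · obtain ⟨M, rfl⟩ := Nat.exists_eq_add_of_le hρ
      rw [show ρ + M + 1 = ρ + (M + 1) by ring, Finset.sum_range_add, Finset.sum_eq_zero, zero_add]
      · have e1 : ((ρ + M : ℕ) : ℤ) - ρ = M := by push_cast; ring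
        have e2 : ((ρ + M : ℕ) : ℤ) + ε + ρ = M + (2 * ρ + ε : ℕ) := by push_cast; ring
        rw [e1, e2, ← h ρ M rfl]
        refine Finset.sum_congr rfl fun t _ => ?_
        have e3 : ((ρ + M : ℕ) : ℤ) - (ρ + t : ℕ) = M - t := by push_cast; ring
        have e4 : ((ρ + t : ℕ) : ℤ) - ρ = t := by push_cast; ring
        have e5 : ((ρ + t : ℕ) : ℤ) + ε + ρ = t + (2 * ρ + ε : ℕ) := by push_cast; ring
        rw [e3, e4, e5, mul_assoc (rr p _)]
      · intro s hs
        rw [rr_neg p (show (s : ℤ) - ρ < 0 by have := Finset.mem_range.mp hs; omega)]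
        ring
    · rw [rr_neg p (show (n : ℤ) - ρ < 0 by omega), Finset.sum_eq_zero]
      · ring
      · intro s hs
        rw [rr_neg p (show (s : ℤ) - ρ < 0 by have := Finset.mem_range.mp hs; omega)]
        ring
  rcases le_or_gt 0 ρ with h0 | h0
  · lift ρ to ℕ using h0
    exact nonneg ρ
  · obtain ⟨σ, rfl⟩ : ∃ σ : ℕ, ρ = -(σ : ℤ) - ε := ⟨(-ρ - ε).toNat, by omega⟩
    rw [hA]
    have e1 : (n : ℤ) - (-(σ : ℤ) - ε) = n + ε + σ := by ring
    have e2 : (n : ℤ) + ε + (-(σ : ℤ) - ε) = n - σ := by ring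
    rw [e1, e2, mul_comm (rr p ((n : ℤ) + ε + σ)), ← nonneg σ]
    refine Finset.sum_congr rfl fun s _ => ?_
    have e1 : (s : ℤ) - (-(σ : ℤ) - ε) = s + ε + σ := by ring
    have e2 : (s : ℤ) + ε + (-(σ : ℤ) - ε) = s - σ := by ring
    rw [e1, e2, mul_comm (rr p ((s : ℤ) + ε + σ))]

/-- The kernel of the ordinary Bailey chain: it multiplies `c ρ` by `p ^ (2(ρ² + ερ))`. -/
theorem kernel_plain {p : F} (hp0 : p ≠ 0) (hp : ∀ n : ℕ, 0 < n → p ^ (2 * n) ≠ 1)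
    {ε : ℕ} (hε : ε ≤ 1) (n : ℕ) (ρ : ℤ) :
    ∑ s ∈ Finset.range (n + 1), p ^ (2 * (s ^ 2 + ε * s)) *
        (rr p (n - s) * (rr p (s - ρ) * rr p (s + ε + ρ))) =
      p ^ (2 * (ρ ^ 2 + ε * ρ)) * (rr p (n - ρ) * rr p (n + ε + ρ)) := by
  refine kernel_extend p hε (fun s => p ^ (2 * (s ^ 2 + ε * s)))
    (fun ρ => p ^ (2 * (ρ ^ 2 + ε * ρ))) n (fun ρ => by congr 1; ring) (fun ρ M _ => ?_) ρ
  have hb : p ^ (2 * (((2 * ρ + ε : ℕ) : ℤ) + 1)) * 1 = p ^ (2 * (((2 * ρ + ε : ℕ) : ℤ) + 1)) :=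
    mul_one _
  have hV := vandermonde hp0 hp 0 1 M _ _ hb
  simp only [zero_mul, add_zero, Finset.prod_const_one, one_mul, zero_add, one_pow, mul_one] at hV
  rw [← hV, Finset.mul_sum]
  refine Finset.sum_congr rfl fun t _ => ?_
  have hprod : ∀ t : ℕ, (∏ j ∈ Finset.range t, p ^ (2 * (((2 * ρ + ε : ℕ) : ℤ) + 1)) * p ^ (2 * j)) *
      p ^ (t * (t - 1)) = p ^ (2 * (t ^ 2 + (2 * ρ + ε) * t)) := by
    intro t
    induction t with
    | zero => simp
    | succ t ih =>
      have h1 : p ^ ((t + 1) * (t + 1 - 1)) = p ^ (t * (t - 1)) * p ^ (2 * t) := by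
        rw [← pow_add]; congr 1
        rcases t with _ | t
        · simp
        · simp; ring
      have h2 : p ^ (2 * (((2 * ρ + ε : ℕ) : ℤ) + 1)) = p ^ (2 * (2 * ρ + ε + 1)) := by
        exact_mod_cast rfl
      rw [Finset.prod_range_succ, h1]
      calc _ = ((∏ j ∈ Finset.range t, p ^ (2 * (((2 * ρ + ε : ℕ) : ℤ) + 1)) * p ^ (2 * j)) *
              p ^ (t * (t - 1))) * (p ^ (2 * (((2 * ρ + ε : ℕ) : ℤ) + 1)) * p ^ (2 * t) * p ^ (2 * t)) := by
            ring
        _ = _ := by rw [ih, h2]; ring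
  rw [hprod]
  have : p ^ (2 * ((ρ : ℤ) ^ 2 + ε * ρ)) = p ^ (2 * (ρ ^ 2 + ε * ρ)) := by exact_mod_cast rfl
  rw [this]
  ring

/-- The common computation behind `kernel_odd_zero` (`ε = 0`) and `kernel_odd_one` (`ε = 1`), for natural `ρ`
and `n = ρ + M`. -/
theorem kernel_odd_nat {p : F} (hp0 : p ≠ 0) (hp : ∀ n : ℕ, 0 < n → p ^ (2 * n) ≠ 1)
    (ε ρ M : ℕ) : ∑ t ∈ Finset.range (M + 1),
      (p ^ ((ρ + t) ^ 2 + 2 * ε * (ρ + t)) * ∏ j ∈ Finset.range (ρ + t), (1 + p ^ (2 * j + 1))) *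
        (rr p (M - t) * rr p t * rr p (t + (2 * ρ + ε : ℕ))) =
      (p ^ (ρ ^ 2 + 2 * ε * ρ) * ((∏ j ∈ Finset.range ρ, (1 + p ^ (2 * j + 1))) *
        ∏ j ∈ Finset.range M, (1 + p ^ (2 * (ρ + ε + j) + 1)))) *
      (rr p M * rr p (M + (2 * ρ + ε : ℕ))) := by
  have hb : p ^ (2 * ρ + 1) * p ^ (2 * ρ + 2 * ε + 1) = p ^ (2 * (((2 * ρ + ε : ℕ) : ℤ) + 1)) := by
    rw [← pow_add, ← zpow_natCast]; congr 1; push_cast; ring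
  have hV := vandermonde hp0 hp 1 _ M _ _ hb
  have e1 : ∏ j ∈ Finset.range M, (1 + p ^ (2 * (ρ + ε + j) + 1)) =
      ∏ j ∈ Finset.range M, (1 + 1 * p ^ (2 * ρ + 2 * ε + 1) * p ^ (2 * j)) :=
    Finset.prod_congr rfl fun j _ => by ring
  rw [e1, ← mul_assoc (p ^ _), mul_assoc (p ^ _ * _), ← hV, Finset.mul_sum]
  refine Finset.sum_congr rfl fun t _ => ?_
  rw [Finset.prod_range_add]
  have e2 : ∏ j ∈ Finset.range t, (1 + p ^ (2 * ρ + 1) * p ^ (2 * j)) =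
      ∏ j ∈ Finset.range t, (1 + p ^ (2 * (ρ + j) + 1)) :=
    Finset.prod_congr rfl fun j _ => by ring
  have e3 : p ^ ((ρ + t) ^ 2 + 2 * ε * (ρ + t)) =
      p ^ (ρ ^ 2 + 2 * ε * ρ) * (p ^ (t * (t - 1)) * (p ^ (2 * ρ + 2 * ε + 1)) ^ t) := by
    rw [← pow_mul, ← pow_add, ← pow_add]; congr 1
    rcases t with _ | t
    · simp
    · simp; ring
  rw [e2, e3]
  ring

/-- The level `0` kernel for the outermost sum, where the product on the right does not depend on `ρ`. -/
theorem kernel_odd_zero {p : F} (hp0 : p ≠ 0) (hp : ∀ n : ℕ, 0 < n → p ^ (2 * n) ≠ 1)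
    (n : ℕ) (ρ : ℤ) :
    ∑ s ∈ Finset.range (n + 1), (p ^ (s ^ 2) * ∏ j ∈ Finset.range s, (1 + p ^ (2 * j + 1))) *
        (rr p (n - s) * (rr p (s - ρ) * rr p (s + (0 : ℕ) + ρ))) =
      (p ^ (ρ ^ 2) * ∏ j ∈ Finset.range n, (1 + p ^ (2 * j + 1))) *
        (rr p (n - ρ) * rr p (n + (0 : ℕ) + ρ)) := by
  refine kernel_extend p (ε := 0) zero_le_one
    (fun s => p ^ (s ^ 2) * ∏ j ∈ Finset.range s, (1 + p ^ (2 * j + 1)))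
    (fun ρ => p ^ (ρ ^ 2) * ∏ j ∈ Finset.range n, (1 + p ^ (2 * j + 1)))
    n (fun ρ => by congr 2; push_cast; ring) (fun ρ M h => ?_) ρ
  have hk := kernel_odd_nat hp0 hp 0 ρ M
  simp only [mul_zero, zero_mul, add_zero] at hk ⊢
  rw [hk, h, Finset.prod_range_add]
  exact_mod_cast rfl

/-- At level `1` the product on the right misses the factor `1 + p ^ (2ρ+1)`, which is why a division
appears; `bb_one_odd` removes it. -/
theorem kernel_odd_one {p : F} (hp0 : p ≠ 0) (hp : ∀ n : ℕ, 0 < n → p ^ (2 * n) ≠ 1)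
    (n : ℕ) (ρ : ℤ) :
    ∑ s ∈ Finset.range (n + 1),
        (p ^ (s ^ 2 + 2 * s) * ∏ j ∈ Finset.range s, (1 + p ^ (2 * j + 1))) *
        (rr p (n - s) * (rr p (s - ρ) * rr p (s + (1 : ℕ) + ρ))) =
      (p ^ (ρ ^ 2 + 2 * ρ) * (∏ j ∈ Finset.range (n + 1), (1 + p ^ (2 * j + 1))) /
        (1 + p ^ (2 * ρ + 1))) * (rr p (n - ρ) * rr p (n + (1 : ℕ) + ρ)) := by
  refine kernel_extend p (ε := 1) le_rfl
    (fun s => p ^ (s ^ 2 + 2 * s) * ∏ j ∈ Finset.range s, (1 + p ^ (2 * j + 1)))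
    (fun ρ => p ^ (ρ ^ 2 + 2 * ρ) * (∏ j ∈ Finset.range (n + 1), (1 + p ^ (2 * j + 1))) /
        (1 + p ^ (2 * ρ + 1)))
    n (fun ρ => ?_) (fun ρ M h => ?_) ρ
  · rw [div_eq_div_iff (one_add_odd_ne hp0 hp _) (one_add_odd_ne hp0 hp _)]
    have h1 : p ^ ((-ρ - (1 : ℕ)) ^ 2 + 2 * (-ρ - (1 : ℕ))) * p ^ (2 * ρ + 1) = p ^ (ρ ^ 2 + 2 * ρ) := by
      rw [← zpow_add₀ hp0]; congr 1; push_cast; ring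
    have h2 : p ^ (ρ ^ 2 + 2 * ρ) * p ^ (2 * (-ρ - (1 : ℕ)) + 1) =
        p ^ ((-ρ - (1 : ℕ)) ^ 2 + 2 * (-ρ - (1 : ℕ))) := by
      rw [← zpow_add₀ hp0]; congr 1; push_cast; ring
    linear_combination (∏ j ∈ Finset.range (n + 1), (1 + p ^ (2 * j + 1))) * (h1 - h2)
  · have hk := kernel_odd_nat hp0 hp 1 ρ M
    simp only [mul_one] at hk ⊢
    rw [hk]
    congr 1
    rw [eq_div_iff (one_add_odd_ne hp0 hp _), h, show ρ + M + 1 = ρ + 1 + M by ring,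
      Finset.prod_range_add, Finset.prod_range_succ]
    have h1 : p ^ (2 * (ρ : ℤ) + 1) = p ^ (2 * ρ + 1) := by exact_mod_cast rfl
    have h2 : p ^ ((ρ : ℤ) ^ 2 + 2 * ρ) = p ^ (ρ ^ 2 + 2 * ρ) := by exact_mod_cast rfl
    rw [h1, h2]
    ring

/-- Bailey's lemma: summing `β` against a kernel with known transform `A` multiplies `c` by `A`. -/
theorem IsBailey.step {p : F} {ε : ℕ} {c : ℤ → F} {β : ℕ → F} (hβ : IsBailey p ε c β)
    (w : ℕ → F) (A : ℤ → F) (n : ℕ)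
    (hk : ∀ ρ : ℤ, ∑ s ∈ Finset.range (n + 1), w s *
      (rr p (n - s) * (rr p (s - ρ) * rr p (s + ε + ρ))) =
      A ρ * (rr p (n - ρ) * rr p (n + ε + ρ))) :
    ∑ s ∈ Finset.range (n + 1), w s * rr p (n - s) * β s =
      ∑ᶠ ρ : ℤ, (A ρ * c ρ) * (rr p (n - ρ) * rr p (n + ε + ρ)) := by
  have h1 : ∀ s ∈ Finset.range (n + 1), w s * rr p (n - s) * β s =
      ∑ᶠ ρ : ℤ, (w s * rr p (n - s) * c ρ) * (rr p (s - ρ) * rr p (s + ε + ρ)) := by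
    intro s _
    rw [hβ s, mul_finsum]
    exact finsum_congr fun ρ => by ring
  rw [Finset.sum_congr rfl h1, ← finsum_sum_comm _ _ fun s _ => finite_support_rr p _ _ _]
  refine finsum_congr fun ρ => ?_
  calc _ = c ρ * ∑ s ∈ Finset.range (n + 1), w s *
      (rr p (n - s) * (rr p (s - ρ) * rr p (s + ε + ρ))) := by
        rw [Finset.mul_sum]; exact Finset.sum_congr rfl fun s _ => by ring
    _ = _ := by rw [hk]; ring

/-- At level `1` the weights are invariant under `ρ ↦ -1 - ρ`, so antisymmetric coefficients sum to `0`. -/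
theorem finsum_antisymm [CharZero F] (p : F) (g : ℤ → F) (hg : ∀ ρ, g (-1 - ρ) = -g ρ) (n : ℕ) :
    ∑ᶠ ρ : ℤ, g ρ * (rr p (n - ρ) * rr p (n + (1 : ℕ) + ρ)) = 0 := by
  -- Characteristic zero: a sum equal to its own negative vanishes.
  refine self_eq_neg.mp ?_
  conv_lhs => rw [← finsum_comp_equiv (Equiv.subLeft (-1 : ℤ))]
  rw [← finsum_neg_distrib]
  refine finsum_congr fun ρ => ?_
  simp only [Equiv.subLeft_apply, hg]
  have e1 : (n : ℤ) - (-1 - ρ) = n + (1 : ℕ) + ρ := by push_cast; ring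
  have e2 : (n : ℤ) + (1 : ℕ) + (-1 - ρ) = n - ρ := by push_cast; ring
  rw [e1, e2]
  ring

/-- The same pair is a Bailey pair at level `1` and at level `0` when `c` satisfies the stated reflection
rule: the difference of the two sums has antisymmetric coefficients `c ρ * p ^ (2(n+1+ρ))`. -/
theorem IsBailey.one_to_zero [CharZero F] {p : F} (hp0 : p ≠ 0)
    (hp : ∀ n : ℕ, 0 < n → p ^ (2 * n) ≠ 1) {c : ℤ → F} {β : ℕ → F} (hβ : IsBailey p 1 c β)
    (hc : ∀ ρ, c (-1 - ρ) = -(c ρ * p ^ (2 * (2 * ρ + 1)))) : IsBailey p 0 c β := by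
  intro n
  have h0 := finsum_antisymm p (fun ρ => c ρ * p ^ (2 * ((n : ℤ) + 1 + ρ))) (fun ρ => by
    simp only [hc]
    rw [neg_mul, mul_assoc, ← zpow_add₀ hp0]
    congr 3; ring) n
  rw [hβ n, ← sub_zero (finsum _), ← h0, ← finsum_sub_distrib (finite_support_rr p _ _ _)
    (finite_support_rr p _ _ _)]
  refine finsum_congr fun ρ => ?_
  have h1 := rr_rec hp ((n : ℤ) + 1 + ρ)
  rw [show (n : ℤ) + 1 + ρ - 1 = n + (0 : ℕ) + ρ by push_cast; ring] at h1
  rw [← h1]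
  push_cast
  ring

theorem neg_one_zpow_flip (ρ : ℤ) : (-1 : F) ^ (-1 - ρ) = -(-1) ^ ρ := by
  rw [zpow_sub₀ (by simp), zpow_neg_one]
  rcases Int.even_or_odd ρ with h | h
  · rw [h.neg_one_zpow]; norm_num
  · rw [h.neg_one_zpow]; norm_num

/-- The unit Bailey pair at level `1`, obtained from `finite_jtp` at `y = -1`, where the factor
`1 + y` of the product vanishes as soon as `n > 0`. -/
theorem isBailey_unit {p : F} (hp0 : p ≠ 0) (hp : ∀ n : ℕ, 0 < n → p ^ (2 * n) ≠ 1) :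
    IsBailey p 1 (fun ρ => (-1) ^ ρ * p ^ (ρ * (ρ - 1))) (fun n => if n = 0 then 1 else 0) := by
  intro n
  have h := finite_jtp hp0 hp (show (-1 : F) ≠ 0 by simp) (n + 1) n
  push_cast at h ⊢
  rw [h]
  rcases n with _ | n
  · have h1 := rr_rec hp 1
    rw [show (1 : ℤ) - 1 = 0 by ring, show rr p 0 = 1 from by simpa using rr_natCast p 0] at h1
    simp
    have h2 : p ^ (2 * (1 : ℤ)) = p ^ 2 := by exact_mod_cast rfl
    rw [h2] at h1
    rw [← sub_eq_add_neg, mul_comm, h1]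
  · rw [Finset.prod_range_succ' (fun l => (1 + -1 * p ^ (2 * l)))]
    simp

/-- The iterated sum with `m` summation variables `t_1 ≥ ⋯ ≥ t_m` below `s`, with
denominator `(p²;p²)_{s-t_1} (p²;p²)_{t_1-t_2} ⋯ (p²;p²)_{t_m}`, in which `t_j` carries
`p ^ (2t²)` if `j < i` and `p ^ (2t² + 2t)` if `j ≥ i`. The truncated subtraction `i - 1` makes
`i = 0` behave like `i = 1`. -/
def bb (p : F) : ℕ → ℕ → ℕ → F
  | 0, _, s => rr p s
  | m + 1, i, s => ∑ t ∈ Finset.range (s + 1),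
      p ^ (2 * (t ^ 2 + if i ≤ 1 then t else 0)) * rr p (s - t) * bb p m (i - 1) t

/-- If every summation variable carries the linear term, all steps stay at level `1`. -/
theorem bb_one {p : F} (hp0 : p ≠ 0) (hp : ∀ n : ℕ, 0 < n → p ^ (2 * n) ≠ 1) (m : ℕ) :
    ∀ i ≤ 1, IsBailey p 1 (fun ρ => (-1) ^ ρ * p ^ (ρ * (ρ - 1) + 2 * (m + 1) * (ρ ^ 2 + ρ)))
      (bb p m i) := by
  have hmul : ∀ (a b : ℤ) (u : F), p ^ a * (u * p ^ b) = u * p ^ (b + a) := by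
    intro a b u; rw [zpow_add₀ hp0]; ring
  induction m with
  | zero =>
    intro i _ n
    have h := (isBailey_unit hp0 hp).step _ _ n (kernel_plain hp0 hp le_rfl n)
    rw [Finset.sum_eq_single_of_mem 0 (by simp) (fun s _ hs => by simp [hs])] at h
    simp only [bb]
    simp only [hmul] at h
    have h' : rr p n = p ^ (2 * (0 ^ 2 + 1 * 0)) * rr p (n - (0 : ℕ)) * (if True then 1 else 0) := by
      simp
    rw [h', h]
    refine finsum_congr fun ρ => ?_
    congr 3
    push_cast; ring
  | succ m ih =>
    intro i hi n
    have h := (ih (i - 1) (by omega)).step _ _ n (kernel_plain hp0 hp le_rfl n)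
    simp only [bb, if_pos hi]
    simp only [hmul, one_mul] at h
    rw [h]
    refine finsum_congr fun ρ => ?_
    congr 3
    push_cast; ring

/-- If the first `j` variables carry no linear term, the chain drops to level `0` after the
innermost `l` steps. -/
theorem bb_two [CharZero F] {p : F} (hp0 : p ≠ 0) (hp : ∀ n : ℕ, 0 < n → p ^ (2 * n) ≠ 1)
    (l j : ℕ) :
    IsBailey p 0 (fun ρ => (-1) ^ ρ *
      p ^ (ρ * (ρ - 1) + 2 * (l + 1) * (ρ ^ 2 + ρ) + 2 * j * ρ ^ 2)) (bb p (l + j) (j + 1)) := by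
  have hmul : ∀ (a b : ℤ) (u : F), p ^ a * (u * p ^ b) = u * p ^ (b + a) := by
    intro a b u; rw [zpow_add₀ hp0]; ring
  induction j with
  | zero =>
    have := (bb_one hp0 hp l 1 le_rfl).one_to_zero hp0 hp (fun ρ => by
      rw [neg_one_zpow_flip, mul_assoc ((-1 : F) ^ ρ), ← zpow_add₀ hp0, neg_mul]
      congr 3; ring)
    simpa using this
  | succ j ih =>
    intro n
    have h := ih.step _ _ n (kernel_plain hp0 hp zero_le_one n)
    rw [← add_assoc]
    simp only [bb, if_neg (show ¬ (j + 1 + 1 ≤ 1) by omega)]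
    simp only [hmul, zero_mul] at h
    rw [show j + 1 + 1 - 1 = j + 1 by omega, h]
    refine finsum_congr fun ρ => ?_
    congr 3
    push_cast; ring

/-- The complete finite identity for `i = j + 2` and `k = l + j + 2`. -/
theorem bb_two_odd [CharZero F] {p : F} (hp0 : p ≠ 0) (hp : ∀ n : ℕ, 0 < n → p ^ (2 * n) ≠ 1)
    (l j n : ℕ) :
    ∑ s ∈ Finset.range (n + 1), (p ^ (s ^ 2) * ∏ j ∈ Finset.range s, (1 + p ^ (2 * j + 1))) *
        rr p (n - s) * bb p (l + j) (j + 1) s =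
      (∏ j ∈ Finset.range n, (1 + p ^ (2 * j + 1))) *
        ∑ᶠ ρ : ℤ, ((-1) ^ ρ * p ^ (2 * (l + j + 2) * ρ ^ 2 + (2 * l + 1) * ρ)) *
          (rr p (n - ρ) * rr p (n + (0 : ℕ) + ρ)) := by
  rw [(bb_two hp0 hp l j).step _ _ n (kernel_odd_zero hp0 hp n), mul_finsum]
  refine finsum_congr fun ρ => ?_
  have : p ^ (2 * ((l : ℤ) + j + 2) * ρ ^ 2 + (2 * l + 1) * ρ) =
      p ^ (ρ * (ρ - 1) + 2 * ((l : ℤ) + 1) * (ρ ^ 2 + ρ) + 2 * j * ρ ^ 2) * p ^ (ρ ^ 2) := by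
    rw [← zpow_add₀ hp0]; congr 1; ring
  rw [this]
  ring

/-- The complete finite identity for `i = 1` and `k = m + 2`. The coefficients
`a ρ / (1 + p ^ (2ρ+1))` produced by `kernel_odd_one` may be replaced by `a ρ`, since their
difference is antisymmetric under `ρ ↦ -1 - ρ`. -/
theorem bb_one_odd [CharZero F] {p : F} (hp0 : p ≠ 0) (hp : ∀ n : ℕ, 0 < n → p ^ (2 * n) ≠ 1)
    (m n : ℕ) :
    ∑ s ∈ Finset.range (n + 1),
        (p ^ (s ^ 2 + 2 * s) * ∏ j ∈ Finset.range s, (1 + p ^ (2 * j + 1))) *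
        rr p (n - s) * bb p m 0 s =
      (∏ j ∈ Finset.range (n + 1), (1 + p ^ (2 * j + 1))) *
        ∑ᶠ ρ : ℤ, ((-1) ^ ρ * p ^ (2 * (m + 2) * ρ ^ 2 + (2 * m + 3) * ρ)) *
          (rr p (n - ρ) * rr p (n + (1 : ℕ) + ρ)) := by
  rw [(bb_one hp0 hp m 0 zero_le_one).step _ _ n (kernel_odd_one hp0 hp n)]
  set a : ℤ → F := fun ρ => (-1) ^ ρ * p ^ (2 * ((m : ℤ) + 2) * ρ ^ 2 + (2 * m + 3) * ρ) with ha
  have hflip : ∀ ρ, a (-1 - ρ) = -(a ρ * p ^ (2 * ρ + 1)) := by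
    intro ρ
    simp only [ha]
    rw [neg_one_zpow_flip, mul_assoc ((-1 : F) ^ ρ), ← zpow_add₀ hp0, neg_mul]
    congr 3; ring
  have h0 := finsum_antisymm p (fun ρ => a ρ * p ^ (2 * ρ + 1) / (1 + p ^ (2 * ρ + 1))) (fun ρ => by
    simp only [hflip]
    have h1 := one_add_odd_ne hp0 hp ρ
    have h2 := one_add_odd_ne hp0 hp (-1 - ρ)
    have h3 : p ^ (2 * (-1 - ρ) + 1) * p ^ (2 * ρ + 1) = 1 := by
      rw [← zpow_add₀ hp0]; ring_nf; simp
    rw [← neg_div, div_eq_div_iff h2 h1]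
    linear_combination (-a ρ * p ^ (2 * ρ + 1)) * h3) n
  have h4 : ∑ᶠ ρ : ℤ, a ρ * (rr p (n - ρ) * rr p (n + (1 : ℕ) + ρ)) =
      ∑ᶠ ρ : ℤ, a ρ / (1 + p ^ (2 * ρ + 1)) * (rr p (n - ρ) * rr p (n + (1 : ℕ) + ρ)) := by
    rw [← sub_eq_zero, ← finsum_sub_distrib (finite_support_rr p _ _ _)
      (finite_support_rr p _ _ _), ← h0]
    refine finsum_congr fun ρ => ?_
    have h1 := one_add_odd_ne hp0 hp ρ
    field_simp
    ring
  rw [h4, mul_finsum]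
  refine finsum_congr fun ρ => ?_
  have : a ρ = (-1) ^ ρ * p ^ (ρ * (ρ - 1) + 2 * ((m : ℤ) + 1) * (ρ ^ 2 + ρ)) * p ^ (ρ ^ 2 + 2 * ρ) := by
    simp only [ha]
    rw [mul_assoc ((-1 : F) ^ ρ), ← zpow_add₀ hp0]; congr 2; ring
  rw [this]
  ring

end bailey

section formal

open Filter Topology WithZero

local notation "K" => LaurentSeries ℚ
local notation "vv" => (Valued.v : Valuation (LaurentSeries ℚ) (WithZero (Multiplicative ℤ)))

/-! ### The `q`-adic topology and infinite products -/

/-- The valuation balls of radius `exp (-D)`, `D : ℕ`, form a basis of neighbourhoods of `0`. -/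
theorem hasBasis_zero : (𝓝 (0 : K)).HasBasis (fun _ : ℕ => True)
    (fun D => {x | vv x ≤ exp (-(D : ℤ))}) := by
  constructor
  intro s
  rw [Valued.mem_nhds_zero]
  constructor
  · rintro ⟨γ, h⟩
    refine ⟨(1 - log (MonoidWithZeroHom.ValueGroup₀.embedding γ.1)).toNat, trivial, fun x hx => h ?_⟩
    simp only [Set.mem_ofPred_eq] at hx ⊢
    rw [Valued.v.restrict_lt_iff_lt_embedding]
    refine hx.trans_lt ?_
    rw [← lt_log_iff_exp_lt (by simp)]
    omega
  · rintro ⟨D, -, h⟩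
    obtain ⟨x, hx⟩ := LaurentSeries.valuation_surjective ℚ (exp (-(D : ℤ)))
    have hx0 : Valued.v.restrict x ≠ 0 := fun h => exp_ne_zero (M := ℤ) (a := -(D : ℤ)) <|
      hx ▸ MonoidWithZeroHom.ValueGroup₀.restrict₀_eq_zero_iff.1 h
    refine ⟨Units.mk0 _ hx0, fun y hy => h ?_⟩
    simp only [Set.mem_ofPred_eq, Units.val_mk0] at hy ⊢
    rw [Valuation.restrict_lt_iff, hx] at hy
    exact hy.le

theorem v_q_zpow (n : ℤ) : vv (q ^ n) = exp (-n) := by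
  rw [map_zpow₀]
  have : vv q = exp (-1) := by
    rw [q]; exact LaurentSeries.valuation_single_zpow ℚ 1
  rw [this, ← exp_zsmul]; simp

theorem v_q_pow (n : ℕ) : vv (q ^ n) = exp (-(n : ℤ)) := by
  rw [← v_q_zpow, zpow_natCast]

theorem q_ne : q ≠ 0 := by
  simp [q]

theorem q_pow_ne {n : ℕ} (hn : 0 < n) : q ^ n ≠ 1 := by
  intro h
  have := v_q_pow n
  rw [h, map_one, ← exp_zero, exp_inj] at this
  omega

instance : NonarchimedeanRing K where
  is_nonarchimedean := by
    intro U hU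
    obtain ⟨D, -, hD⟩ := hasBasis_zero.mem_iff.1 hU
    refine ⟨⟨{ carrier := {x | vv x ≤ exp (-(D : ℤ))}
               zero_mem' := by simp
               add_mem' := fun {a b} ha hb => Valuation.map_add_le (v := vv) ha hb
               neg_mem' := fun {a} ha => by simpa using ha }, ?_⟩, hD⟩
    refine AddSubgroup.isOpen_of_mem_nhds _ (g := 0) ?_
    exact hasBasis_zero.mem_of_mem (i := D) trivial

theorem tendsto_zero_iff {ι : Type*} {l : Filter ι} {f : ι → K} :
    Tendsto f l (𝓝 0) ↔ ∀ D : ℕ, ∀ᶠ i in l, vv (f i) ≤ exp (-(D : ℤ)) := by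
  simp [hasBasis_zero.tendsto_right_iff]

theorem v_le_of_tendsto {ι : Type*} {l : Filter ι} [l.NeBot] {f : ι → K} {a : K} (D : ℕ)
    (h : Tendsto f l (𝓝 a)) (hf : ∀ i, vv (f i) ≤ exp (-(D : ℤ))) : vv a ≤ exp (-(D : ℤ)) := by
  have h' : Tendsto (fun i => f i - a) l (𝓝 0) := by
    simpa using h.sub_const a
  obtain ⟨i, hi⟩ := (tendsto_zero_iff.1 h' D).exists
  have := Valuation.map_sub_le (v := vv) (hf i) hi
  simpa using this

theorem v_tsum_le {ι : Type*} {f : ι → K} (D : ℕ) (hs : Summable f)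
    (hf : ∀ i, vv (f i) ≤ exp (-(D : ℤ))) : vv (∑' i, f i) ≤ exp (-(D : ℤ)) :=
  v_le_of_tendsto D hs.hasSum fun _ => Valuation.map_sum_le (v := vv) fun i _ => hf i

theorem summable_iff {ι : Type*} {f : ι → K} (h : Tendsto f cofinite (𝓝 0)) : Summable f :=
  NonarchimedeanAddGroup.summable_of_tendsto_cofinite_zero h

theorem mul_tendsto_zero {ι : Type*} {l : Filter ι} {c g : ι → K} (hc : Tendsto c l (𝓝 0))
    (hg : ∀ i, vv (g i) ≤ 1) : Tendsto (fun i => c i * g i) l (𝓝 0) := by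
  rw [tendsto_zero_iff] at hc ⊢
  intro D
  filter_upwards [hc D] with i hi
  rw [map_mul]
  simpa using mul_le_mul' hi (hg i)

/-- Dominated convergence for the `q`-adic valuation (Tannery's theorem), in the case where all pointwise
limits agree. -/
theorem tannery {ι : Type*} {c : ι → K} {g : ℕ → ι → K} {L : K}
    (hc : Tendsto c cofinite (𝓝 0)) (hg : ∀ n i, vv (g n i) ≤ 1)
    (hL : ∀ i, Tendsto (fun n => g n i) atTop (𝓝 L))  :
    Tendsto (fun n => ∑' i, c i * g n i) atTop (𝓝 ((∑' i, c i) * L)) := by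
  have hLv (i : ι) : vv L ≤ 1 := by simpa using v_le_of_tendsto 0 (hL i) (by simpa using fun n => hg n i)
  have hs (n) : Summable fun i => c i * g n i := summable_iff (mul_tendsto_zero hc (hg n))
  have hsc := summable_iff hc
  rw [← hsc.tsum_mul_right, ← tendsto_sub_nhds_zero_iff, tendsto_zero_iff]
  intro D
  have hfin := tendsto_zero_iff.1 hc D
  rw [eventually_cofinite] at hfin
  have hmain : ∀ i ∈ hfin.toFinset, ∀ᶠ n in atTop, vv (c i * (g n i - L)) ≤ exp (-(D : ℤ)) := by
    intro i _
    have : Tendsto (fun n => c i * (g n i - L)) atTop (𝓝 0) := by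
      simpa using ((hL i).sub_const L).const_mul (c i)
    exact tendsto_zero_iff.1 this D
  rw [← Filter.eventually_all_finset] at hmain
  filter_upwards [hmain] with n hn
  rw [← (hs n).tsum_sub (hsc.mul_right L)]
  refine v_tsum_le D ((hs n).sub (hsc.mul_right L)) fun i => ?_
  rw [← mul_sub]
  by_cases hi : i ∈ hfin.toFinset
  · exact hn i hi
  · simp only [Set.Finite.mem_toFinset, Set.mem_ofPred_eq, not_not] at hi
    rw [map_mul]
    simpa using mul_le_mul' hi (Valuation.map_sub_le (v := vv) (hg n i) (hLv i))


theorem v_pow_le {x : K} (hx : vv x ≤ exp (-1)) (j : ℕ) : vv (x ^ j) ≤ exp (-(j : ℤ)) := by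
  rw [map_pow]
  refine (pow_le_pow_left' hx j).trans_eq ?_
  rw [← exp_nsmul]; simp

theorem v_mul_pow_le {a x : K} (ha : vv a ≤ 1) (hx : vv x ≤ exp (-1)) (j : ℕ) :
    vv (a * x ^ j) ≤ exp (-(j : ℤ)) := by
  rw [map_mul]
  simpa using mul_le_mul' ha (v_pow_le hx j)

/-- The partial products of `pochInf a x` converge. The product is multipliable because the products
`∏_{j ∈ s} a x ^ j` tend to `0` as the finite set `s` leaves every finite family. -/
theorem tendsto_poch {a x : K} (ha : vv a ≤ 1) (hx : vv x ≤ exp (-1)) :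
    Tendsto (fun n => poch a x n) atTop (𝓝 (pochInf a x)) := by
  have hm : Multipliable fun j : ℕ => 1 + (-(a * x ^ j)) := by
    refine multipliable_one_add_of_summable_prod (summable_iff ?_)
    rw [tendsto_zero_iff]
    intro D
    rw [eventually_cofinite]
    refine (Finset.range D).powerset.finite_toSet.subset fun s hs => ?_
    simp only [Finset.coe_powerset, Set.mem_preimage, Set.mem_powerset_iff, Finset.coe_subset]
    intro j hj
    by_contra hjD
    apply hs
    rw [← Finset.mul_prod_erase s _ hj, map_mul]
    have h1 : vv (-(a * x ^ j)) ≤ exp (-(D : ℤ)) := by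
      rw [Valuation.map_neg]
      refine (v_mul_pow_le ha hx j).trans ?_
      rw [exp_le_exp]
      simp at hjD
      omega
    have h2 : vv (∏ j ∈ s.erase j, -(a * x ^ j)) ≤ 1 := by
      rw [map_prod]
      refine Finset.prod_le_one' fun k _ => ?_
      rw [Valuation.map_neg]
      refine (v_mul_pow_le ha hx k).trans ?_
      rw [← exp_zero, exp_le_exp]
      omega
    simpa using mul_le_mul' h1 h2
  simpa only [poch, pochInf, sub_eq_add_neg] using hm.hasProd.tendsto_prod_nat

theorem v_poch {a x : K} (ha : vv a ≤ exp (-1)) (hx : vv x ≤ exp (-1)) (n : ℕ) :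
    vv (poch a x n) = 1 := by
  rw [poch, map_prod]
  refine Finset.prod_eq_one fun j _ => ?_
  refine Valuation.map_one_sub_of_lt _ ?_
  rw [map_mul]
  have h : vv (x ^ j) ≤ 1 := (v_pow_le hx j).trans (by rw [← exp_zero, exp_le_exp]; omega)
  refine lt_of_le_of_lt (mul_le_mul' ha h) ?_
  rw [mul_one, ← exp_zero, exp_lt_exp]; omega

theorem exp_neg_one_le : (exp (-1) : WithZero (Multiplicative ℤ)) ≤ 1 := by
  rw [← exp_zero, exp_le_exp]; omega

/-- The partial products all have valuation `1`, so the infinite product does not vanish. -/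
theorem pochInf_ne {a x : K} (ha : vv a ≤ exp (-1)) (hx : vv x ≤ exp (-1)) :
    pochInf a x ≠ 0 := by
  intro h0
  have h := tendsto_poch (ha.trans exp_neg_one_le) hx
  rw [h0] at h
  obtain ⟨n, hn⟩ := (tendsto_zero_iff.1 h 1).exists
  rw [v_poch ha hx, ← exp_zero, exp_le_exp] at hn
  omega

theorem v_sq_le {p : K} (hp : vv p ≤ exp (-1)) : vv (p ^ 2) ≤ exp (-1) :=
  (v_pow_le hp 2).trans (by rw [exp_le_exp]; omega)

theorem rr_eq_poch (p : K) (n : ℕ) : rr p n = (poch (p ^ 2) (p ^ 2) n)⁻¹ := rfl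

theorem v_rr_le {p : K} (hp : vv p ≤ exp (-1)) (n : ℤ) : vv (rr p n) ≤ 1 := by
  rcases lt_or_ge n 0 with h | h
  · rw [rr_neg p h]; simp
  · lift n to ℕ using h
    rw [rr_eq_poch, map_inv₀, v_poch (v_sq_le hp) (v_sq_le hp), inv_one]

theorem tendsto_rr {p : K} (hp : vv p ≤ exp (-1)) (u : ℕ → ℤ) (hu : Tendsto u atTop atTop) :
    Tendsto (fun n => rr p (u n)) atTop (𝓝 (pochInf (p ^ 2) (p ^ 2))⁻¹) := by
  have h : Tendsto (fun n : ℕ => rr p (n : ℤ)) atTop (𝓝 (pochInf (p ^ 2) (p ^ 2))⁻¹) :=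
    (tendsto_poch ((v_sq_le hp).trans exp_neg_one_le) (v_sq_le hp)).inv₀
      (pochInf_ne (v_sq_le hp) (v_sq_le hp))
  have h2 : Tendsto (fun n => (u n).toNat) atTop atTop :=
    Filter.tendsto_atTop.2 fun b => (hu.eventually_ge_atTop b).mono fun n hn => by omega
  refine (h.comp h2).congr' ?_
  filter_upwards [hu.eventually_ge_atTop 0] with n hn
  simp [Int.toNat_of_nonneg hn]

/-- Powers of `q` with exponents tending to infinity tend to zero. -/
theorem tendsto_q_zpow {ι : Type*} {e : ι → ℤ} (he : Tendsto e cofinite atTop) :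
    Tendsto (fun i => q ^ e i) cofinite (𝓝 0) := by
  rw [tendsto_zero_iff]
  intro D
  filter_upwards [he.eventually_ge_atTop D] with i hi
  rw [v_q_zpow, exp_le_exp]
  omega

theorem tendsto_quadratic {a b : ℤ} (ha : |b| < a) :
    Tendsto (fun r : ℤ => a * r ^ 2 + b * r) cofinite atTop := by
  rw [Filter.tendsto_atTop]
  intro D
  rw [eventually_cofinite]
  refine (Set.finite_Icc (-|D|) |D|).subset fun r hr => ?_
  simp only [Set.mem_ofPred_eq, not_le] at hr
  by_contra hc
  have h1 : |D| < |r| := by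
    rw [Set.mem_Icc, ← abs_le] at hc
    exact not_le.1 hc
  have h2 : |b * r| ≤ |b| * |r| := (abs_mul b r).le
  have h3 := neg_abs_le (b * r)
  have h4 := le_abs_self D
  have h5 := sq_abs r
  have h6 := abs_nonneg D
  have h7 := abs_nonneg b
  have h8 : |r| ≤ |r| ^ 2 := by nlinarith
  have h9 : 0 ≤ |b| * (|r| ^ 2 - |r|) := mul_nonneg h7 (by linarith)
  have h10 : 0 ≤ (a - |b| - 1) * |r| ^ 2 := mul_nonneg (by linarith) (sq_nonneg _)
  rw [← h5] at hr
  nlinarith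

/-! ### From tuples to iterated sums -/

/-- The summand of `bb q m i s` attached to the tuple `N`. It vanishes unless
`s ≥ N 0 ≥ N 1 ≥ ⋯`, so it may be summed over all tuples. -/
def chain : (m : ℕ) → ℕ → (Fin m → ℕ) → ℕ → K
  | 0, _, _, s => rr q s
  | m + 1, i, N, s => q ^ (2 * ((N 0) ^ 2 + if i ≤ 1 then N 0 else 0)) * rr q ((s : ℤ) - (N 0 : ℕ)) *
      chain m (i - 1) (fun j => N j.succ) (N 0)

theorem chain_succ (m i : ℕ) (N : Fin (m + 1) → ℕ) (s : ℕ) : chain (m + 1) i N s =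
    q ^ (2 * ((N 0) ^ 2 + if i ≤ 1 then N 0 else 0)) * rr q ((s : ℤ) - (N 0 : ℕ)) *
      chain m (i - 1) (fun j => N j.succ) (N 0) := rfl

theorem chain_support (m : ℕ) : ∀ (i : ℕ) (N : Fin m → ℕ) (s : ℕ), chain m i N s ≠ 0 →
    Antitone N ∧ ∀ j, N j ≤ s := by
  induction m with
  | zero => exact fun i N s _ => ⟨fun a => a.elim0, fun a => a.elim0⟩
  | succ m ih =>
    intro i N s h
    rw [chain_succ] at h
    have h1 := right_ne_zero_of_mul h
    have h2 := right_ne_zero_of_mul (left_ne_zero_of_mul h)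
    obtain ⟨ha, hb⟩ := ih _ _ _ h1
    have h0 : N 0 ≤ s := by
      by_contra hc
      exact h2 (rr_neg _ (by omega))
    constructor
    · intro a b hab
      induction a using Fin.cases with
      | zero =>
        induction b using Fin.cases with
        | zero => exact le_rfl
        | succ b => exact hb b
      | succ a =>
        induction b using Fin.cases with
        | zero => exact absurd hab (by simp)
        | succ b => exact ha (Fin.succ_le_succ_iff.1 hab)
    · intro j
      induction j using Fin.cases with
      | zero => exact h0
      | succ j => exact (hb j).trans h0

theorem v_q_le : vv q ≤ exp (-1) := by simpa using (v_q_pow 1).le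

theorem v_q_pow_le_one (n : ℕ) : vv (q ^ n) ≤ 1 := by
  rw [v_q_pow, ← exp_zero, exp_le_exp]; omega

theorem v_chain_le (m : ℕ) : ∀ (i : ℕ) (N : Fin m → ℕ) (s : ℕ), vv (chain m i N s) ≤ 1 := by
  induction m with
  | zero => exact fun i N s => v_rr_le v_q_le _
  | succ m ih =>
    intro i N s
    rw [chain_succ, map_mul, map_mul]
    exact mul_le_one' (mul_le_one' (v_q_pow_le_one _) (v_rr_le v_q_le _)) (ih _ _ _)

theorem tsum_cons {m : ℕ} {f : (Fin (m + 1) → ℕ) → K} (hf : Summable f) :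
    ∑' N, f N = ∑' (t : ℕ) (N : Fin m → ℕ), f (Fin.cons t N) := by
  rw [← (Fin.consEquiv (fun _ : Fin (m + 1) => ℕ)).tsum_eq]
  exact ((Fin.consEquiv (fun _ : Fin (m + 1) => ℕ)).summable_iff.2 hf).tsum_prod

theorem tsum_chain (m : ℕ) : ∀ i s : ℕ, ∑' N : Fin m → ℕ, chain m i N s = bb q m i s := by
  induction m with
  | zero => intro i s; rw [tsum_fintype]; simp [chain, bb]
  | succ m ih =>
    intro i s
    have hfin : (Function.support fun N : Fin (m + 1) → ℕ => chain (m + 1) i N s).Finite :=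
      (Set.finite_Iic (fun _ : Fin (m + 1) => s)).subset fun N hN => (chain_support _ _ _ _ hN).2
    rw [tsum_cons (summable_of_hasFiniteSupport hfin)]
    simp only [chain_succ, Fin.cons_zero, Fin.cons_succ, tsum_mul_left, ih]
    rw [bb, tsum_eq_sum (s := Finset.range (s + 1))]
    intro t ht
    rw [rr_neg _ (by simp at ht; omega)]; simp

/-- The explicit form of `chain` on antitone tuples, which for `s = N 0` is the summand of the multiple
sum without the factor `(-q^{1-2s};q²)_s`. -/
theorem chain_eq (m : ℕ) : ∀ (i : ℕ) (N : Fin m → ℕ) (s : ℕ), Antitone N → first N ≤ s →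
    chain m i N s = q ^ (2 * ((∑ j, (N j) ^ 2) + ∑ j : Fin m, if i ≤ (j : ℕ) + 1 then N j else 0)) *
      rr q ((s : ℤ) - first N) / ∏ j, poch (q ^ 2) (q ^ 2) (N j - next N j) := by
  induction m with
  | zero => intro i N s _ _; simp [chain, first]
  | succ m ih =>
    intro i N s hN hs
    have hnext0 : next N 0 = first (fun j => N j.succ) := by
      unfold next first
      by_cases hm : 0 < m
      · simp [hm]
      · simp [hm]
    have hle : first (fun j => N j.succ) ≤ N 0 := by
      unfold first
      split_ifs
      · exact hN (Fin.zero_le _)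
      · exact Nat.zero_le _
    have hnext (j : Fin m) : next N j.succ = next (fun j => N j.succ) j := by
      unfold next
      by_cases hj : (j : ℕ) + 1 < m
      · simp [hj]
      · simp [hj]
    have hf : first N = N 0 := by simp [first]
    rw [chain_succ, ih _ _ _ (fun a b hab => hN (Fin.succ_le_succ_iff.2 hab)) hle,
      Fin.sum_univ_succ, Fin.sum_univ_succ, Fin.prod_univ_succ, hnext0, hf]
    simp only [hnext]
    rw [← Nat.cast_sub hle, rr_eq_poch q (N 0 - _)]
    have e : ∀ j : Fin m, (i - 1 ≤ (j : ℕ) + 1) ↔ (i ≤ (j.succ : ℕ) + 1) := fun j => by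
      simp only [Fin.val_succ]; omega
    simp only [e]
    simp only [Fin.val_zero, zero_add, div_eq_mul_inv, mul_inv]
    ring

/-- `(-q^{1-2s};q²)_s q^{s²} = (-q;q²)_s`: reversing the product turns the factor with index `j` into
`1 + q ^ (-(2j+1))`. -/
theorem poch_neg_odd (s : ℕ) : poch (-(q ^ ((1 : ℤ) - 2 * (s : ℤ)))) (q ^ 2) s * q ^ (s ^ 2) =
    ∏ j ∈ Finset.range s, (1 + q ^ (2 * j + 1)) := by
  rw [poch, ← Finset.prod_range_reflect]
  have h : ∀ j ∈ Finset.range s, (1 - -(q ^ ((1 : ℤ) - 2 * (s : ℤ))) * (q ^ 2) ^ (s - 1 - j)) =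
      1 + (q ^ (2 * j + 1))⁻¹ := by
    intro j hj
    rw [Finset.mem_range] at hj
    rw [neg_mul, sub_neg_eq_add, ← pow_mul, ← zpow_natCast, ← zpow_natCast, ← zpow_add₀ q_ne,
      ← zpow_neg]
    congr 2
    omega
  rw [Finset.prod_congr rfl h]
  clear h
  induction s with
  | zero => simp
  | succ s ih =>
    rw [Finset.prod_range_succ, Finset.prod_range_succ, ← ih]
    have := pow_ne_zero (2 * s + 1) q_ne
    have e : q ^ (s + 1) ^ 2 = q ^ s ^ 2 * q ^ (2 * s + 1) := by rw [← pow_add]; congr 1; ring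
    rw [e]
    field_simp
    ring

theorem v_prod_odd_le (s : ℕ) : vv (∏ j ∈ Finset.range s, (1 + q ^ (2 * j + 1))) ≤ 1 := by
  rw [map_prod]
  refine Finset.prod_le_one' fun j _ => Valuation.map_add_le _ (by simp) (v_q_pow_le_one _)

/-- The factor of the summand that depends only on `N_1 = s`, with the negative powers of `q`
absorbed into `q ^ (2s²)`. -/
def wt (i s : ℕ) : K :=
  q ^ (s ^ 2 + 2 * if i ≤ 1 then s else 0) * ∏ j ∈ Finset.range s, (1 + q ^ (2 * j + 1))

theorem v_wt_le (i s : ℕ) : vv (wt i s) ≤ exp (-(s : ℤ)) := by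
  rw [wt, map_mul]
  have h1 : vv (q ^ (s ^ 2 + 2 * if i ≤ 1 then s else 0)) ≤ exp (-(s : ℤ)) := by
    rw [v_q_pow, exp_le_exp, neg_le_neg_iff]
    exact_mod_cast (show s ≤ s ^ 2 by nlinarith [Nat.le_mul_self s]).trans (Nat.le_add_right _ _)
  simpa using mul_le_mul' h1 (v_prod_odd_le s)

/-- The multiple sum for `k = m + 2`, as a single sum over the value `s` of `N_1`. -/
theorem lhs_eq (m i : ℕ) :
    (∑' N : {N : Fin (m + 1) → ℕ // Antitone N},
      poch (-(q ^ ((1 : ℤ) - 2 * (first N.1 : ℤ)))) (q ^ 2) (first N.1) *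
        q ^ (2 * ((∑ j, (N.1 j) ^ 2) + ∑ j : Fin (m + 1), if i ≤ (j : ℕ) + 1 then N.1 j else 0)) /
        ∏ j, poch (q ^ 2) (q ^ 2) (N.1 j - next N.1 j)) =
    ∑' s : ℕ, wt i s * bb q m (i - 1) s := by
  have hf (N : Fin (m + 1) → ℕ) : first N = N 0 := by simp [first]
  have h0 (n : ℕ) : rr q ((n : ℤ) - n) = 1 := by
    rw [sub_self, ← Nat.cast_zero, rr_eq_poch]; simp [poch]
  have hterm (N : Fin (m + 1) → ℕ) :
      poch (-(q ^ ((1 : ℤ) - 2 * (first N : ℤ)))) (q ^ 2) (first N) * chain (m + 1) i N (first N) =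
      wt i (N 0) * chain m (i - 1) (fun j => N j.succ) (N 0) := by
    rw [hf, chain_succ, h0, wt, ← poch_neg_odd]
    ring
  have hsub := tsum_subtype_eq_of_support_subset (s := {N : Fin (m + 1) → ℕ | Antitone N})
    (f := fun N => poch (-(q ^ ((1 : ℤ) - 2 * (first N : ℤ)))) (q ^ 2) (first N) *
      chain (m + 1) i N (first N))
    (fun N hN => (chain_support _ _ _ _ (right_ne_zero_of_mul hN)).1)
  have hsum : Summable fun N : Fin (m + 1) → ℕ =>
      wt i (N 0) * chain m (i - 1) (fun j => N j.succ) (N 0) := by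
    refine summable_iff (tendsto_zero_iff.2 fun D => ?_)
    rw [eventually_cofinite]
    refine (Set.finite_Iic (fun _ : Fin (m + 1) => D)).subset fun N hN => ?_
    simp only [Set.mem_ofPred_eq] at hN
    have h1 : chain m (i - 1) (fun j => N j.succ) (N 0) ≠ 0 := by
      intro h; apply hN; simp [h]
    have h2 : N 0 ≤ D := by
      by_contra hc
      apply hN
      rw [map_mul]
      have h3 : vv (wt i (N 0)) ≤ exp (-(D : ℤ)) :=
        (v_wt_le i (N 0)).trans (by rw [exp_le_exp]; omega)
      simpa using mul_le_mul' h3 (v_chain_le _ _ _ _)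
    have h4 := (chain_support _ _ _ _ h1).2
    intro j
    induction j using Fin.cases with
    | zero => exact h2
    | succ j => exact (h4 j).trans h2
  calc _ = _ := by
        refine Eq.trans (tsum_congr fun N => ?_) hsub
        obtain ⟨N, hN⟩ := N
        rw [chain_eq _ _ _ _ hN le_rfl, h0, mul_one, mul_div_assoc]
    _ = ∑' N : Fin (m + 1) → ℕ, wt i (N 0) * chain m (i - 1) (fun j => N j.succ) (N 0) :=
        tsum_congr hterm
    _ = _ := by
        rw [tsum_cons hsum]
        simp only [Fin.cons_zero, Fin.cons_succ, tsum_mul_left, tsum_chain]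

/-! ### Passage to the limit -/

theorem v_q_pow_le {n : ℕ} (hn : 0 < n) : vv (q ^ n) ≤ exp (-1) := by
  rw [v_q_pow, exp_le_exp]; omega

theorem v_bb_le (m : ℕ) : ∀ i s : ℕ, vv (bb q m i s) ≤ 1 := by
  induction m with
  | zero => exact fun i s => v_rr_le v_q_le _
  | succ m ih =>
    intro i s
    rw [bb]
    refine Valuation.map_sum_le (v := vv) fun t _ => ?_
    rw [map_mul, map_mul]
    exact mul_le_one' (mul_le_one' (v_q_pow_le_one _) (v_rr_le v_q_le _)) (ih _ _)

/-- The limit of the right-hand sides of the finite identities. -/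
theorem tendsto_bilateral {p : K} (hp : vv p ≤ exp (-1)) {c : ℤ → K} (hc : Tendsto c cofinite (𝓝 0))
    (e : ℕ) : Tendsto (fun n : ℕ => ∑ᶠ r : ℤ, c r * (rr p (n - r) * rr p (n + e + r))) atTop
      (𝓝 ((∑' r, c r) * ((pochInf (p ^ 2) (p ^ 2))⁻¹ * (pochInf (p ^ 2) (p ^ 2))⁻¹))) := by
  have h := tannery (g := fun (n : ℕ) (r : ℤ) => rr p (n - r) * rr p (n + e + r)) hc
    (fun n r => by
      rw [map_mul]; exact mul_le_one' (v_rr_le hp _) (v_rr_le hp _))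
    (fun r => (tendsto_rr hp _ ?_).mul (tendsto_rr hp _ ?_))
  · refine h.congr fun n => ?_
    exact tsum_eq_finsum (finite_support_rr p c n (n + e))
  · exact tendsto_atTop_add_const_right _ _ tendsto_natCast_atTop_atTop
  · exact tendsto_atTop_add_const_right _ _
      (tendsto_atTop_add_const_right _ _ tendsto_natCast_atTop_atTop)

/-- The limit of the left-hand sides of the finite identities. -/
theorem tendsto_unilateral (m i i' : ℕ) :
    Tendsto (fun n : ℕ => ∑ s ∈ Finset.range (n + 1), wt i s * rr q ((n : ℤ) - s) * bb q m i' s)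
      atTop (𝓝 ((∑' s, wt i s * bb q m i' s) * (pochInf (q ^ 2) (q ^ 2))⁻¹)) := by
  have hw : Tendsto (fun s => wt i s) cofinite (𝓝 0) := by
    rw [tendsto_zero_iff]
    intro D
    rw [Nat.cofinite_eq_atTop]
    filter_upwards [eventually_ge_atTop D] with s hs
    exact (v_wt_le i s).trans (by rw [exp_le_exp]; omega)
  have h := tannery (g := fun (n : ℕ) (s : ℕ) => rr q ((n : ℤ) - s))
    (mul_tendsto_zero hw (v_bb_le m i')) (fun n s => v_rr_le v_q_le _)
    (fun s => tendsto_rr v_q_le _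
      (tendsto_atTop_add_const_right _ _ tendsto_natCast_atTop_atTop))
  refine h.congr fun n => ?_
  rw [tsum_eq_sum (s := Finset.range (n + 1))]
  · exact Finset.sum_congr rfl fun s _ => by ring
  · intro s hs
    rw [rr_neg _ (by simp at hs; omega), mul_zero]

/-- The theta series `∑_ρ (-1)^ρ q^{2kρ² + (2k-2i+1)ρ}`. -/
def theta (k i : ℕ) : K :=
  ∑' r : ℤ, (-1) ^ r * q ^ (2 * (k : ℤ) * r ^ 2 + (2 * (k : ℤ) - 2 * i + 1) * r)

theorem tendsto_theta {k i : ℕ} (hi : 1 ≤ i) (hik : i ≤ k) :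
    Tendsto (fun r : ℤ => (-1) ^ r * q ^ (2 * (k : ℤ) * r ^ 2 + (2 * (k : ℤ) - 2 * i + 1) * r))
      cofinite (𝓝 0) := by
  have h := tendsto_q_zpow (tendsto_quadratic
    (a := 2 * (k : ℤ)) (b := 2 * (k : ℤ) - 2 * i + 1) (by rw [abs_lt]; omega))
  have h' := mul_tendsto_zero (g := fun r : ℤ => (-1) ^ r) h
    (fun r => by rw [map_zpow₀, Valuation.map_neg, map_one, one_zpow])
  exact h'.congr fun r => mul_comm _ _

/-- The Jacobi triple product, as the limit of `finite_jtp` in base `q ^ (4k)`. -/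
theorem theta_eq {k i : ℕ} (hi : 1 ≤ i) (hik : i ≤ k) :
    theta k i = pochInf (q ^ (4 * k)) (q ^ (4 * k)) * pochInf (q ^ (2 * i - 1)) (q ^ (4 * k)) *
          pochInf (q ^ (4 * k - 2 * i + 1)) (q ^ (4 * k)) := by
  have hx : vv (q ^ (4 * k)) ≤ exp (-1) := v_q_pow_le (by omega)
  have hP : vv (q ^ (2 * k)) ≤ exp (-1) := v_q_pow_le (by omega)
  have hP2 : (q ^ (2 * k)) ^ 2 = q ^ (4 * k) := by rw [← pow_mul]; congr 1; ring
  have hz : ∀ n : ℕ, q ^ n ≠ 0 := fun n => pow_ne_zero n q_ne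
  have h1 := tendsto_bilateral hP (tendsto_theta hi hik) 0
  have h2 : Tendsto (fun n : ℕ => rr (q ^ (2 * k)) ((n + n : ℕ) : ℤ) *
      poch (q ^ (2 * i - 1)) (q ^ (4 * k)) n * poch (q ^ (4 * k - 2 * i + 1)) (q ^ (4 * k)) n) atTop
      (𝓝 ((pochInf (q ^ (4 * k)) (q ^ (4 * k)))⁻¹ * pochInf (q ^ (2 * i - 1)) (q ^ (4 * k)) *
          pochInf (q ^ (4 * k - 2 * i + 1)) (q ^ (4 * k)))) := by
    refine ((?_ : Tendsto _ _ _).mul (tendsto_poch (v_q_pow_le_one _) hx)).mul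
      (tendsto_poch (v_q_pow_le_one _) hx)
    have := tendsto_rr hP (fun n => ((n + n : ℕ) : ℤ))
      (tendsto_natCast_atTop_atTop.comp (tendsto_id.atTop_add_atTop tendsto_id))
    rwa [hP2] at this
  have h3 := tendsto_nhds_unique h1 (h2.congr fun n => ?_)
  · rw [hP2] at h3
    have hne := pochInf_ne hx hx
    change theta k i * _ = _ at h3
    field_simp at h3
    linear_combination h3
  -- The exponents match for `y = -q ^ (4k-2i+1)`, as `y ^ r * (q ^ (2k)) ^ (r(r-1))` is the theta term.
  · have hj := finite_jtp (p := q ^ (2 * k)) (y := -q ^ (4 * k - 2 * i + 1)) (hz _)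
      (fun n hn => by rw [← pow_mul]; exact q_pow_ne (Nat.mul_pos (by omega) (by omega)))
      (neg_ne_zero.2 (hz _)) n n
    have hc : ∀ r : ℤ, (-q ^ (4 * k - 2 * i + 1)) ^ r * (q ^ (2 * k)) ^ (r * (r - 1)) =
        (-1) ^ r * q ^ (2 * (k : ℤ) * r ^ 2 + (2 * (k : ℤ) - 2 * i + 1) * r) := by
      intro r
      rw [neg_eq_neg_one_mul, mul_zpow, mul_assoc, ← zpow_natCast, ← zpow_natCast, ← zpow_mul,
        ← zpow_mul, ← zpow_add₀ q_ne]
      congr 2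
      push_cast [Nat.cast_sub (show 2 * i ≤ 4 * k by omega)]
      ring
    have hm : ∀ l : ℕ, 1 + (-q ^ (4 * k - 2 * i + 1))⁻¹ * (q ^ (2 * k)) ^ (2 * (l + 1)) =
        1 - q ^ (2 * i - 1) * (q ^ (4 * k)) ^ l := by
      intro l
      have : q ^ (2 * i - 1) * (q ^ (4 * k)) ^ l * q ^ (4 * k - 2 * i + 1) =
          (q ^ (2 * k)) ^ (2 * (l + 1)) := by
        rw [← pow_mul, ← pow_mul, ← pow_add, ← pow_add]
        congr 1
        have : 2 * k * (2 * (l + 1)) = 4 * k * l + 4 * k := by ring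
        omega
      have hb := hz (4 * k - 2 * i + 1)
      generalize q ^ (4 * k - 2 * i + 1) = b at hb this ⊢
      rw [← this]
      field_simp
      ring
    have hn : ∀ l : ℕ, 1 + (-q ^ (4 * k - 2 * i + 1)) * (q ^ (2 * k)) ^ (2 * l) =
        1 - q ^ (4 * k - 2 * i + 1) * (q ^ (4 * k)) ^ l := by
      intro l
      rw [pow_mul (q ^ (2 * k)), hP2]
      ring
    simp only [hc, hm, hn] at hj
    simp only [poch]
    rw [← hj]
    simp

theorem poch_q_two_mul (n : ℕ) : poch q q (2 * n) * poch (-q) (q ^ 2) n =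
    poch (q ^ 2) (q ^ 2) n * poch (q ^ 2) (q ^ 4) n := by
  simp only [poch]
  induction n with
  | zero => simp
  | succ n ih =>
    rw [show 2 * (n + 1) = 2 * n + 1 + 1 by ring]
    simp only [Finset.prod_range_succ]
    linear_combination (1 - q * q ^ (2 * n)) * (1 - q * q ^ (2 * n + 1)) *
      (1 - -q * (q ^ 2) ^ n) * ih

theorem pochInf_q : pochInf q q * pochInf (-q) (q ^ 2) =
    pochInf (q ^ 2) (q ^ 2) * pochInf (q ^ 2) (q ^ 4) := by
  have h2 := v_q_pow_le (n := 2) (by omega)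
  have h4 := v_q_pow_le (n := 4) (by omega)
  have h1 := v_q_le.trans exp_neg_one_le
  refine tendsto_nhds_unique (((tendsto_poch h1 v_q_le).comp
    (tendsto_id.const_mul_atTop' (r := 2) (by norm_num))).mul
    (tendsto_poch (a := -q) (by rwa [Valuation.map_neg]) h2)) ?_
  refine ((tendsto_poch (v_q_pow_le_one 2) h2).mul (tendsto_poch (v_q_pow_le_one 2) h4)).congr ?_
  intro n
  exact (poch_q_two_mul n).symm

theorem poch_q_four_mul (n : ℕ) : poch q q (4 * n) =
    poch (q ^ 2) (q ^ 4) n * (poch (q ^ 4) (q ^ 4) n * poch q (q ^ 4) n * poch (q ^ 3) (q ^ 4) n) := by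
  simp only [poch]
  induction n with
  | zero => simp
  | succ n ih =>
    rw [show 4 * (n + 1) = 4 * n + 1 + 1 + 1 + 1 by ring]
    simp only [Finset.prod_range_succ, ih]
    ring

theorem pochInf_q_four : pochInf q q = pochInf (q ^ 2) (q ^ 4) *
    (pochInf (q ^ 4) (q ^ 4) * pochInf q (q ^ 4) * pochInf (q ^ 3) (q ^ 4)) := by
  have h4 := v_q_pow_le (n := 4) (by omega)
  have h1 := v_q_le.trans exp_neg_one_le
  refine tendsto_nhds_unique ((tendsto_poch h1 v_q_le).comp
    (tendsto_id.const_mul_atTop' (r := 4) (by norm_num))) ?_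
  refine ((tendsto_poch (v_q_pow_le_one 2) h4).mul (((tendsto_poch (v_q_pow_le_one 4) h4).mul
    (tendsto_poch h1 h4)).mul (tendsto_poch (v_q_pow_le_one 3) h4))).congr ?_
  intro n
  exact (poch_q_four_mul n).symm

theorem prod_odd_eq (n : ℕ) : ∏ j ∈ Finset.range n, (1 + q ^ (2 * j + 1)) = poch (-q) (q ^ 2) n :=
  Finset.prod_congr rfl fun j _ => by ring

instance : CharZero K := algebraRat.charZero K

theorem sum_eq (m i : ℕ) (hi : 1 ≤ i) (him : i ≤ m + 2) :
    ∑' s, wt i s * bb q m (i - 1) s =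
      pochInf (-q) (q ^ 2) * (pochInf (q ^ 2) (q ^ 2))⁻¹ * theta (m + 2) i := by
  have hq : ∀ n : ℕ, 0 < n → q ^ (2 * n) ≠ 1 := fun n hn => q_pow_ne (by omega)
  have h2 := v_q_pow_le (n := 2) (by omega)
  have hR := inv_ne_zero (pochInf_ne h2 h2)
  have hprod := tendsto_poch (a := -q) (x := q ^ 2)
    (by rw [Valuation.map_neg]; exact v_q_le.trans exp_neg_one_le) h2
  -- Both finite identities pass to the same limit, whatever the level `e` and the product length `u n`.
  have hfin : ∀ e : ℕ, ∀ u : ℕ → ℕ, Tendsto u atTop atTop →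
      (∀ n, ∑ s ∈ Finset.range (n + 1), wt i s * rr q ((n : ℤ) - s) * bb q m (i - 1) s =
        poch (-q) (q ^ 2) (u n) * ∑ᶠ r : ℤ, (-1) ^ r * q ^ (2 * ((m + 2 : ℕ) : ℤ) * r ^ 2 +
          (2 * ((m + 2 : ℕ) : ℤ) - 2 * i + 1) * r) * (rr q (n - r) * rr q (n + e + r))) → 
      ∑' s, wt i s * bb q m (i - 1) s =
        pochInf (-q) (q ^ 2) * (pochInf (q ^ 2) (q ^ 2))⁻¹ * theta (m + 2) i := by
    intro e u hu h
    have h3 := (hprod.comp hu).mul (tendsto_bilateral v_q_le (tendsto_theta hi him) e)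
    have h4 := tendsto_nhds_unique (tendsto_unilateral m i (i - 1)) (h3.congr fun n => (h n).symm)
    change _ = _ * (theta (m + 2) i * _) at h4
    refine mul_right_cancel₀ hR (h4.trans ?_)
    ring
  obtain rfl | hi2 := hi.eq_or_lt
  -- For `i = 1` the chain stays at level `1`, and the product has `n + 1` factors.
  · refine hfin 1 (fun n => n + 1) (tendsto_add_atTop_nat 1) fun n => ?_
    have h := bb_one_odd q_ne hq m n
    rw [prod_odd_eq] at h
    refine Eq.trans (Finset.sum_congr rfl fun s _ => by simp [wt]) (h.trans ?_)
    congr 1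
    refine finsum_congr fun r => ?_
    congr 3
    push_cast; ring
  · obtain ⟨j, rfl⟩ : ∃ j, i = j + 2 := ⟨i - 2, by omega⟩
    obtain ⟨l, rfl⟩ : ∃ l, m = l + j := ⟨m - j, by omega⟩
    refine hfin 0 (fun n => n) tendsto_id fun n => ?_
    have h := bb_two_odd q_ne hq l j n
    rw [prod_odd_eq] at h
    refine Eq.trans (Finset.sum_congr rfl fun s _ => by simp [wt]) (h.trans ?_)
    congr 1
    refine finsum_congr fun r => ?_
    congr 3
    push_cast; ring

end formal

theorem bressoud (k i : ℕ) (hi : 1 ≤ i) (hik : i ≤ k) :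
    (∑' N : {N : Fin (k - 1) → ℕ // Antitone N},
      poch (-(q ^ ((1 : ℤ) - 2 * (first N.1 : ℤ)))) (q ^ 2) (first N.1) *
        q ^ (2 * ((∑ j : Fin (k - 1), (N.1 j) ^ 2) +
          ∑ j : Fin (k - 1), if i ≤ (j : ℕ) + 1 then N.1 j else 0)) /
        ∏ j : Fin (k - 1), poch (q ^ 2) (q ^ 2) (N.1 j - next N.1 j))
    = pochInf (q ^ 2) (q ^ 4) *
        (pochInf (q ^ (4 * k)) (q ^ (4 * k)) * pochInf (q ^ (2 * i - 1)) (q ^ (4 * k)) *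
          pochInf (q ^ (4 * k - 2 * i + 1)) (q ^ (4 * k))) / pochInf q q := by
  have h2 := v_q_pow_le (n := 2) (by omega)
  have hqq := pochInf_ne v_q_le v_q_le
  have hq2 := pochInf_ne h2 h2
  obtain rfl | hk := (hi.trans hik).eq_or_lt
  -- For `k = 1` the only tuple is the empty one.
  · obtain rfl : i = 1 := by omega
    have hu : Unique {N : Fin (1 - 1) → ℕ // Antitone N} :=
      { default := ⟨fun _ => 0, fun _ _ _ => le_rfl⟩
        uniq := fun N => Subtype.ext (funext fun j => j.elim0) }
    rw [tsum_fintype, Fintype.sum_unique]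
    have e : pochInf q q = pochInf (q ^ 2) (q ^ 4) * (pochInf (q ^ (4 * 1)) (q ^ (4 * 1)) *
        pochInf (q ^ (2 * 1 - 1)) (q ^ (4 * 1)) *
          pochInf (q ^ (4 * 1 - 2 * 1 + 1)) (q ^ (4 * 1))) := by
      simpa using pochInf_q_four
    rw [← e, div_self hqq]
    simp [first, poch]
  · obtain ⟨m, rfl⟩ : ∃ m, k = m + 2 := ⟨k - 2, by omega⟩
    rw [← theta_eq hi hik]
    refine (lhs_eq m i).trans ((sum_eq m i hi hik).trans ?_)
    field_simp
    linear_combination theta (m + 2) i * pochInf_q
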